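/- arXiv:1712.03913 — 2 statements merged into one kernel-verified Lean document; each statement's English description precedes it below -/
import Mathlib

section
/- Under Assumption 2.b, a pair (i,j) is a sequential maximization pair if and only if it is a pure-strategy Nash equilibrium of the cooperative game that fulfills the rules of the road (i.e., a Nash equilibrium maximizing the leader's payoff among all Nash equilibria of the cooperative game); in particular such Nash equilibria exist. -/
open scoped Classical

noncomputable section

/-- Sequential game payoff of the leader (depends only on his own trajectory). -/
def aSeq {Γ1 : Type*} (κ : ℝ) (T1 : Γ1 → Prop) (p1 : Γ1 → ℝ) (i : Γ1) : ℝ :=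
  if T1 i then κ else p1 i

/-- Follower payoff (same in the sequential and the cooperative game). -/
def bPay {Γ1 Γ2 : Type*} (κ lam : ℝ) (T2 : Γ2 → Prop) (C : Γ1 → Γ2 → Prop)
    (p2 : Γ2 → ℝ) (i : Γ1) (j : Γ2) : ℝ :=
  if T2 j then κ else if C i j then lam else p2 j

/-- Cooperative game payoff of the leader. -/
def aPay {Γ1 Γ2 : Type*} (κ lam : ℝ) (T1 : Γ1 → Prop) (C : Γ1 → Γ2 → Prop)
    (p1 : Γ1 → ℝ) (i : Γ1) (j : Γ2) : ℝ :=
  if T1 i then κ else if C i j then lam else p1 i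

/-- Blocking game payoff of the leader. -/
def aBl {Γ1 Γ2 : Type*} (κ lam w : ℝ) (T1 : Γ1 → Prop) (C : Γ1 → Γ2 → Prop)
    (p1 : Γ1 → ℝ) (p2 : Γ2 → ℝ) (i : Γ1) (j : Γ2) : ℝ :=
  if T1 i then κ else if C i j then lam else if p1 i < p2 j then p1 i else p1 i + w

/-- Blocking game payoff of the follower. -/
def bBl {Γ1 Γ2 : Type*} (κ lam w : ℝ) (T2 : Γ2 → Prop) (C : Γ1 → Γ2 → Prop)
    (p1 : Γ1 → ℝ) (p2 : Γ2 → ℝ) (i : Γ1) (j : Γ2) : ℝ :=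
  if T2 j then κ else if C i j then lam else if p1 i ≥ p2 j then p2 j else p2 j + w

/-- A trajectory pair is feasible: stays on track and does not collide. -/
def Feasible {Γ1 Γ2 : Type*} (T1 : Γ1 → Prop) (T2 : Γ2 → Prop) (C : Γ1 → Γ2 → Prop)
    (i : Γ1) (j : Γ2) : Prop :=
  ¬ T1 i ∧ ¬ T2 j ∧ ¬ C i j

/-- Best-response set of player 2 to strategy `i` of player 1. -/
def BestResponse {Γ1 Γ2 : Type*} (B : Γ1 → Γ2 → ℝ) (i : Γ1) : Set Γ2 :=
  {j | ∀ j', B i j' ≤ B i j}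

/-- Stackelberg equilibrium with player 1 as leader. -/
def StackelbergEq {Γ1 Γ2 : Type*} (A B : Γ1 → Γ2 → ℝ) (iStar : Γ1) (jStar : Γ2) : Prop :=
  (∀ i, sInf (A i '' BestResponse B i) ≤ sInf (A iStar '' BestResponse B iStar)) ∧
  jStar ∈ BestResponse B iStar

/-- Pure-strategy Nash equilibrium. -/
def NashEq {Γ1 Γ2 : Type*} (A B : Γ1 → Γ2 → ℝ) (iStar : Γ1) (jStar : Γ2) : Prop :=
  (∀ i, A i jStar ≤ A iStar jStar) ∧ (∀ j, B iStar j ≤ B iStar jStar)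

/-- Sequential maximization pair: the leader maximizes `aSeq`, the follower best responds. -/
def SeqMaxPair {Γ1 Γ2 : Type*} (κ lam : ℝ) (T1 : Γ1 → Prop) (T2 : Γ2 → Prop)
    (C : Γ1 → Γ2 → Prop) (p1 : Γ1 → ℝ) (p2 : Γ2 → ℝ) (iS : Γ1) (jS : Γ2) : Prop :=
  (∀ i, aSeq κ T1 p1 i ≤ aSeq κ T1 p1 iS) ∧
  (∀ j, bPay κ lam T2 C p2 iS j ≤ bPay κ lam T2 C p2 iS jS)

/-- Assumption 2.a: a feasible trajectory pair exists. -/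
def AssumptionA {Γ1 Γ2 : Type*} (T1 : Γ1 → Prop) (T2 : Γ2 → Prop)
    (C : Γ1 → Γ2 → Prop) : Prop :=
  ∃ i j, Feasible T1 T2 C i j

/-- Assumption 2.b. -/
def AssumptionB {Γ1 Γ2 : Type*} (κ lam : ℝ) (T1 : Γ1 → Prop) (T2 : Γ2 → Prop)
    (C : Γ1 → Γ2 → Prop) (p1 : Γ1 → ℝ) (p2 : Γ2 → ℝ) : Prop :=
  (∃ i, ¬ T1 i) ∧
  ∃ jbar : Γ2, ∀ i' : Γ1, (∀ i, aSeq κ T1 p1 i ≤ aSeq κ T1 p1 i') →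
    lam < bPay κ lam T2 C p2 i' jbar

/-- Blocking trajectory pair. -/
def BlockingPair {Γ1 Γ2 : Type*} (T1 : Γ1 → Prop) (T2 : Γ2 → Prop)
    (C : Γ1 → Γ2 → Prop) (p1 : Γ1 → ℝ) (p2 : Γ2 → ℝ) (i : Γ1) (j : Γ2) : Prop :=
  Feasible T1 T2 C i j ∧ p2 j < p1 i ∧ ∀ jc, p2 j < p2 jc → (T2 jc ∨ C i jc)

/-! The leader's sequential payoff bounds his cooperative payoff from above, with equality as soon
as the pair does not collide. At a sequential maximization pair the follower can secure more than
the collision penalty, so her best response avoids the collision, the bound is attained, and the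
leader gets the largest cooperative payoff of all. Hence such a pair is a Nash equilibrium that is
best for the leader. Conversely, a Nash equilibrium that is best for the leader pays him at least
what a sequential maximization pair does, namely the maximum of his sequential payoff. -/

section LeaderOptimalNash

variable {Γ1 Γ2 : Type*} {A B : Γ1 → Γ2 → ℝ} {f : Γ1 → ℝ} {i : Γ1} {j : Γ2}

/-- A Nash equilibrium that is best for the leader among all Nash equilibria. For the cooperative
game these are the equilibria that fulfill the rules of the road. -/
def IsLeaderOptimalNash (A B : Γ1 → Γ2 → ℝ) (i : Γ1) (j : Γ2) : Prop :=
  NashEq A B i j ∧ ∀ i' j', NashEq A B i' j' → A i' j' ≤ A i j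

theorem isLeaderOptimalNash_of_forall_le (hA : ∀ i' j', A i' j' ≤ A i j)
    (hj : j ∈ BestResponse B i) : IsLeaderOptimalNash A B i j :=
  ⟨⟨fun i' => hA i' j, hj⟩, fun i' j' _ => hA i' j'⟩

theorem isLeaderOptimalNash_iff_forall_le_and_mem_bestResponse (hle : ∀ i j, A i j ≤ f i)
    (heq : ∀ i j, (∀ i', f i' ≤ f i) → j ∈ BestResponse B i → A i j = f i)
    (hex : ∃ i j, (∀ i', f i' ≤ f i) ∧ j ∈ BestResponse B i) :
    IsLeaderOptimalNash A B i j ↔ (∀ i', f i' ≤ f i) ∧ j ∈ BestResponse B i := by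
  have optimal_of_max {i j} (hi : ∀ i', f i' ≤ f i) (hj : j ∈ BestResponse B i) :
      IsLeaderOptimalNash A B i j :=
    isLeaderOptimalNash_of_forall_le
      (fun i' j' => (hle i' j').trans ((hi i').trans_eq (heq i j hi hj).symm)) hj
  refine ⟨fun ⟨hN, hopt⟩ => ⟨fun i' => ?_, hN.2⟩, fun ⟨hi, hj⟩ => optimal_of_max hi hj⟩
  obtain ⟨i₀, j₀, hi₀, hj₀⟩ := hex
  calc f i' ≤ f i₀ := hi₀ i'
    _ = A i₀ j₀ := (heq i₀ j₀ hi₀ hj₀).symm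
    _ ≤ A i j := hopt i₀ j₀ (optimal_of_max hi₀ hj₀).1
    _ ≤ f i := hle i j

end LeaderOptimalNash

section RacingGame

variable {Γ1 Γ2 : Type*} {κ lam : ℝ} {T1 : Γ1 → Prop} {T2 : Γ2 → Prop}
  {C : Γ1 → Γ2 → Prop} {p1 : Γ1 → ℝ} {p2 : Γ2 → ℝ} {i : Γ1} {j : Γ2}

theorem aPay_le_aSeq (hp1 : lam ≤ p1 i) : aPay κ lam T1 C p1 i j ≤ aSeq κ T1 p1 i := by
  unfold aPay aSeq
  split_ifs <;> linarith

theorem aPay_eq_aSeq_of_not_collision (h : ¬ C i j) :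
    aPay κ lam T1 C p1 i j = aSeq κ T1 p1 i := by
  simp [aPay, aSeq, h]

theorem bPay_le_of_collision (hκlam : κ ≤ lam) (h : C i j) :
    bPay κ lam T2 C p2 i j ≤ lam := by
  unfold bPay
  split_ifs <;> linarith

theorem not_collision_of_mem_bestResponse (hκlam : κ ≤ lam)
    (hi : ∃ j', lam < bPay κ lam T2 C p2 i j') (hj : j ∈ BestResponse (bPay κ lam T2 C p2) i) :
    ¬ C i j := by
  obtain ⟨j', hj'⟩ := hi
  exact fun hC => (hj'.trans_le (hj j')).not_ge (bPay_le_of_collision hκlam hC)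

theorem exists_seqMaxPair [Finite Γ1] [Finite Γ2] [Nonempty Γ1] [Nonempty Γ2] (κ lam : ℝ)
    (T1 : Γ1 → Prop) (T2 : Γ2 → Prop) (C : Γ1 → Γ2 → Prop) (p1 : Γ1 → ℝ) (p2 : Γ2 → ℝ) :
    ∃ i j, SeqMaxPair κ lam T1 T2 C p1 p2 i j := by
  obtain ⟨i, hi⟩ := Finite.exists_max (aSeq κ T1 p1)
  obtain ⟨j, hj⟩ := Finite.exists_max (bPay κ lam T2 C p2 i)
  exact ⟨i, j, hi, hj⟩

theorem stmt10_general (hκlam : κ ≤ lam) (hp1 : ∀ i, lam ≤ p1 i)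
    (hsecure : ∀ i, (∀ i', aSeq κ T1 p1 i' ≤ aSeq κ T1 p1 i) → ∃ j, lam < bPay κ lam T2 C p2 i j)
    (hex : ∃ i j, SeqMaxPair κ lam T1 T2 C p1 p2 i j) :
    (∀ i j, SeqMaxPair κ lam T1 T2 C p1 p2 i j ↔
      IsLeaderOptimalNash (aPay κ lam T1 C p1) (bPay κ lam T2 C p2) i j) ∧
    ∃ i j, IsLeaderOptimalNash (aPay κ lam T1 C p1) (bPay κ lam T2 C p2) i j := by
  have attained (i j) (hi : ∀ i', aSeq κ T1 p1 i' ≤ aSeq κ T1 p1 i)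
      (hj : j ∈ BestResponse (bPay κ lam T2 C p2) i) :
      aPay κ lam T1 C p1 i j = aSeq κ T1 p1 i :=
    aPay_eq_aSeq_of_not_collision (not_collision_of_mem_bestResponse hκlam (hsecure i hi) hj)
  have hiff (i j) : SeqMaxPair κ lam T1 T2 C p1 p2 i j ↔
      IsLeaderOptimalNash (aPay κ lam T1 C p1) (bPay κ lam T2 C p2) i j :=
    (isLeaderOptimalNash_iff_forall_le_and_mem_bestResponse (f := aSeq κ T1 p1)
      (fun i _ => aPay_le_aSeq (hp1 i)) attained hex).symm
  obtain ⟨i, j, hij⟩ := hex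
  exact ⟨hiff, i, j, (hiff i j).1 hij⟩

end RacingGame

theorem stmt10 {Γ1 Γ2 : Type*} [Fintype Γ1] [Fintype Γ2] [Nonempty Γ1] [Nonempty Γ2]
    (κ lam : ℝ) (hκlam : κ < lam) (hlam0 : lam < 0)
    (T1 : Γ1 → Prop) (T2 : Γ2 → Prop) (C : Γ1 → Γ2 → Prop)
    (p1 : Γ1 → ℝ) (p2 : Γ2 → ℝ)
    (hp1 : ∀ i, 0 < p1 i) (hp2 : ∀ j, 0 < p2 j)
    (hB : AssumptionB κ lam T1 T2 C p1 p2) :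
    (∀ (i : Γ1) (j : Γ2), SeqMaxPair κ lam T1 T2 C p1 p2 i j ↔
      (NashEq (aPay κ lam T1 C p1) (bPay κ lam T2 C p2) i j ∧
        ∀ (i' : Γ1) (j' : Γ2), NashEq (aPay κ lam T1 C p1) (bPay κ lam T2 C p2) i' j' →
          aPay κ lam T1 C p1 i' j' ≤ aPay κ lam T1 C p1 i j)) ∧
    ∃ (i : Γ1) (j : Γ2),
      NashEq (aPay κ lam T1 C p1) (bPay κ lam T2 C p2) i j ∧
      ∀ (i' : Γ1) (j' : Γ2), NashEq (aPay κ lam T1 C p1) (bPay κ lam T2 C p2) i' j' →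
        aPay κ lam T1 C p1 i' j' ≤ aPay κ lam T1 C p1 i j := by
  have lam_le_p1 (i) : lam ≤ p1 i := (hlam0.trans (hp1 i)).le
  exact stmt10_general hκlam.le lam_le_p1 (fun i hi => hB.2.imp fun _ hj => hj i hi)
    (exists_seqMaxPair κ lam T1 T2 C p1 p2)

end
end

section
/- Let w ≥ 0 and suppose Assumption 2.a holds. If (i_cg, j_cg) is a Stackelberg equilibrium of the cooperative game with p1 i_cg > p2 j_cg, then (i_cg, j_cg) is a Stackelberg equilibrium of the blocking game. -/
open scoped Classical

noncomputable section

/-!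
In the blocking game the follower's payoff is a strictly increasing function of its cooperative
payoff: values above `p1 i` are raised by `w`, the others, among them the penalties, are kept. So
both games have the same best responses. A feasible pair gives the leader a positive value, so the
cooperative equilibrium is feasible. The leader gains at most `w` by passing to the blocking game,
and exactly `w` at an equilibrium it wins, because there all best responses earn the follower the
same progress. Hence `icg` still maximizes the leader's value.
-/

section BestResponse

variable {Γ1 Γ2 : Type*} {A A' B B' : Γ1 → Γ2 → ℝ} {i : Γ1} {j : Γ2} {w x : ℝ}

/-- The payoff `min_{j ∈ R(i)} A(i,j)` that the leader secures with `i`, as the infimum that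
`StackelbergEq` maximizes; it takes the junk value `0` when `i` has no best response. -/
def leaderValue (A B : Γ1 → Γ2 → ℝ) (i : Γ1) : ℝ :=
  sInf (A i '' BestResponse B i)

theorem bestResponse_nonempty [Finite Γ2] [Nonempty Γ2] (B : Γ1 → Γ2 → ℝ) (i : Γ1) :
    (BestResponse B i).Nonempty :=
  Finite.exists_max (B i)

theorem bestResponse_eq_of_strictMono {φ : ℝ → ℝ} (hφ : StrictMono φ)
    (h : ∀ j, B' i j = φ (B i j)) : BestResponse B' i = BestResponse B i := by
  simp only [BestResponse, h, hφ.le_iff_le]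

theorem leaderValue_le (hbdd : BddBelow (Set.range (A i))) (hj : j ∈ BestResponse B i) :
    leaderValue A B i ≤ A i j :=
  csInf_le (hbdd.mono (Set.image_subset_range _ _)) (Set.mem_image_of_mem _ hj)

theorem le_leaderValue (hne : (BestResponse B i).Nonempty)
    (h : ∀ j ∈ BestResponse B i, x ≤ A i j) : x ≤ leaderValue A B i :=
  le_csInf (hne.image _) (Set.forall_mem_image.2 h)

theorem leaderValue_le_add (hbdd : BddBelow (Set.range (A i)))
    (hne : (BestResponse B i).Nonempty) (h : ∀ j ∈ BestResponse B i, A i j ≤ A' i j + w) :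
    leaderValue A B i ≤ leaderValue A' B i + w :=
  sub_le_iff_le_add.1 <| le_leaderValue hne fun j hj =>
    sub_le_iff_le_add.2 <| (leaderValue_le hbdd hj).trans (h j hj)

theorem StackelbergEq.of_le_add (h : StackelbergEq A B i j)
    (hB : BestResponse B' = BestResponse B) (hne : ∀ i, (BestResponse B i).Nonempty)
    (hbdd : ∀ i, BddBelow (Set.range (A' i))) (hle : ∀ i j, A' i j ≤ A i j + w)
    (hge : ∀ j ∈ BestResponse B i, A i j + w ≤ A' i j) : StackelbergEq A' B' i j := by
  have hbddA : BddBelow (Set.range (A i)) := by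
    obtain ⟨c, hc⟩ := hbdd i
    refine ⟨c - w, Set.forall_mem_range.2 fun k => ?_⟩
    exact sub_le_iff_le_add.2 ((hc (Set.mem_range_self k)).trans (hle i k))
  have hvalue : leaderValue A B i ≤ leaderValue A' B i + -w :=
    leaderValue_le_add hbddA (hne i) fun k hk => le_add_neg_iff_add_le.2 (hge k hk)
  rw [StackelbergEq, hB]
  refine ⟨fun i' => ?_, h.2⟩
  calc leaderValue A' B i'
      ≤ leaderValue A B i' + w := leaderValue_le_add (hbdd i') (hne i') fun k _ => hle i' k
    _ ≤ leaderValue A B i + w := by gcongr; exact h.1 i'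
    _ ≤ leaderValue A' B i := le_add_neg_iff_add_le.1 hvalue

end BestResponse

/-- Adds the bonus `w` to a payoff exceeding the opponent's progress `p`. This turns the follower's
cooperative payoff into its blocking payoff. -/
def addBonusAbove (p w x : ℝ) : ℝ :=
  if x ≤ p then x else x + w

theorem strictMono_addBonusAbove {w : ℝ} (hw : 0 ≤ w) (p : ℝ) :
    StrictMono (addBonusAbove p w) := by
  intro x y hxy
  unfold addBonusAbove
  split_ifs <;> linarith

section RacingGame

variable {Γ1 Γ2 : Type*} {κ lam w : ℝ} {T1 : Γ1 → Prop} {T2 : Γ2 → Prop} {C : Γ1 → Γ2 → Prop}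
  {p1 : Γ1 → ℝ} {p2 : Γ2 → ℝ} {i : Γ1} {j k : Γ2}

theorem aPay_eq (hT1 : ¬ T1 i) (hC : ¬ C i j) : aPay κ lam T1 C p1 i j = p1 i := by
  simp only [aPay, hT1, hC, if_false]

theorem bPay_eq (hT2 : ¬ T2 j) (hC : ¬ C i j) : bPay κ lam T2 C p2 i j = p2 j :=
  aPay_eq (C := flip C) hT2 hC

theorem aPay_pos_iff (hκ : κ ≤ 0) (hlam : lam ≤ 0) (hp1 : 0 < p1 i) :
    0 < aPay κ lam T1 C p1 i j ↔ ¬ T1 i ∧ ¬ C i j := by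
  unfold aPay
  split_ifs <;> simp_all

theorem bPay_pos_iff (hκ : κ ≤ 0) (hlam : lam ≤ 0) (hp2 : 0 < p2 j) :
    0 < bPay κ lam T2 C p2 i j ↔ ¬ T2 j ∧ ¬ C i j :=
  aPay_pos_iff (C := flip C) hκ hlam hp2

theorem lt_bPay_iff (hκlam : κ < lam) (hp2 : κ < p2 j) :
    κ < bPay κ lam T2 C p2 i j ↔ ¬ T2 j := by
  unfold bPay
  split_ifs <;> simp_all

theorem le_aPay (hκlam : κ ≤ lam) (hp1 : κ ≤ p1 i) (j : Γ2) : κ ≤ aPay κ lam T1 C p1 i j := by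
  unfold aPay
  split_ifs <;> simp_all

theorem aPay_le_aBl (hw : 0 ≤ w) : aPay κ lam T1 C p1 i j ≤ aBl κ lam w T1 C p1 p2 i j := by
  unfold aPay aBl
  split_ifs <;> linarith

theorem aBl_le_aPay_add (hw : 0 ≤ w) :
    aBl κ lam w T1 C p1 p2 i j ≤ aPay κ lam T1 C p1 i j + w := by
  unfold aPay aBl
  split_ifs <;> linarith

theorem aBl_eq_aPay_add (hT1 : ¬ T1 i) (hC : ¬ C i j) (hp : p2 j ≤ p1 i) :
    aBl κ lam w T1 C p1 p2 i j = aPay κ lam T1 C p1 i j + w := by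
  simp only [aBl, aPay, hT1, hC, hp.not_gt, if_false]

theorem bBl_eq_addBonusAbove (hκ : κ ≤ p1 i) (hlam : lam ≤ p1 i) (j : Γ2) :
    bBl κ lam w T2 C p1 p2 i j = addBonusAbove (p1 i) w (bPay κ lam T2 C p2 i j) := by
  unfold bBl bPay addBonusAbove
  split_ifs <;> simp_all

theorem bestResponse_bBl (hw : 0 ≤ w) (hκ : ∀ i, κ ≤ p1 i) (hlam : ∀ i, lam ≤ p1 i) :
    BestResponse (bBl κ lam w T2 C p1 p2) = BestResponse (bPay κ lam T2 C p2) :=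
  funext fun i => bestResponse_eq_of_strictMono (strictMono_addBonusAbove hw (p1 i))
    (bBl_eq_addBonusAbove (hκ i) (hlam i))

theorem Feasible.of_mem_bestResponse (h : Feasible T1 T2 C i j) (hκ : κ ≤ 0) (hlam : lam ≤ 0)
    (hp2 : ∀ j, 0 < p2 j) (hk : k ∈ BestResponse (bPay κ lam T2 C p2) i) :
    Feasible T1 T2 C i k :=
  have hpos : 0 < bPay κ lam T2 C p2 i k :=
    ((bPay_pos_iff hκ hlam (hp2 j)).2 h.2).trans_le (hk j)
  ⟨h.1, (bPay_pos_iff hκ hlam (hp2 k)).1 hpos⟩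

theorem Feasible.progress_le_leaderValue (h : Feasible T1 T2 C i j) (hκ : κ ≤ 0) (hlam : lam ≤ 0)
    (hp2 : ∀ j, 0 < p2 j) (hne : (BestResponse (bPay κ lam T2 C p2) i).Nonempty) :
    p1 i ≤ leaderValue (aPay κ lam T1 C p1) (bPay κ lam T2 C p2) i :=
  le_leaderValue hne fun _ hk =>
    have hfeas := h.of_mem_bestResponse hκ hlam hp2 hk
    (aPay_eq hfeas.1 hfeas.2.2).ge

theorem Feasible.progress_eq_of_mem_bestResponse (h : Feasible T1 T2 C i j)
    (h' : Feasible T1 T2 C i k) (hj : j ∈ BestResponse (bPay κ lam T2 C p2) i)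
    (hk : k ∈ BestResponse (bPay κ lam T2 C p2) i) : p2 j = p2 k := by
  calc p2 j = bPay κ lam T2 C p2 i j := (bPay_eq h.2.1 h.2.2).symm
    _ = bPay κ lam T2 C p2 i k := le_antisymm (hk j) (hj k)
    _ = p2 k := bPay_eq h'.2.1 h'.2.2

theorem StackelbergEq.feasible
    (h : StackelbergEq (aPay κ lam T1 C p1) (bPay κ lam T2 C p2) i j)
    (hκlam : κ < lam) (hlam : lam < 0) (hp1 : ∀ i, 0 < p1 i) (hp2 : ∀ j, 0 < p2 j)
    (hne : ∀ i, (BestResponse (bPay κ lam T2 C p2) i).Nonempty)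
    (hA : AssumptionA T1 T2 C) : Feasible T1 T2 C i j := by
  have hκ : κ < 0 := hκlam.trans hlam
  obtain ⟨i₀, j₀, h₀⟩ := hA
  have hbdd : BddBelow (Set.range (aPay κ lam T1 C p1 i)) :=
    ⟨κ, Set.forall_mem_range.2 (le_aPay hκlam.le (hκ.trans (hp1 i)).le)⟩
  have hpos : 0 < aPay κ lam T1 C p1 i j :=
    calc 0 < p1 i₀ := hp1 i₀
      _ ≤ leaderValue (aPay κ lam T1 C p1) (bPay κ lam T2 C p2) i₀ :=
        h₀.progress_le_leaderValue hκ.le hlam.le hp2 (hne i₀)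
      _ ≤ leaderValue (aPay κ lam T1 C p1) (bPay κ lam T2 C p2) i := h.1 i₀
      _ ≤ aPay κ lam T1 C p1 i j := leaderValue_le hbdd h.2
  have hT2 : ¬ T2 j := (lt_bPay_iff hκlam (hκ.trans (hp2 j))).1 <|
    ((lt_bPay_iff hκlam (hκ.trans (hp2 j₀))).2 h₀.2.1).trans_le (h.2 j₀)
  obtain ⟨hT1, hC⟩ := (aPay_pos_iff hκ.le hlam.le (hp1 i)).1 hpos
  exact ⟨hT1, hT2, hC⟩

end RacingGame

theorem stmt11_general {Γ1 Γ2 : Type*} {κ lam w : ℝ} (hκlam : κ < lam) (hlam : lam < 0)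
    {T1 : Γ1 → Prop} {T2 : Γ2 → Prop} {C : Γ1 → Γ2 → Prop} {p1 : Γ1 → ℝ} {p2 : Γ2 → ℝ}
    (hp1 : ∀ i, 0 < p1 i) (hp2 : ∀ j, 0 < p2 j) (hw : 0 ≤ w)
    (hne : ∀ i, (BestResponse (bPay κ lam T2 C p2) i).Nonempty) (hA : AssumptionA T1 T2 C)
    {icg : Γ1} {jcg : Γ2}
    (hst : StackelbergEq (aPay κ lam T1 C p1) (bPay κ lam T2 C p2) icg jcg)
    (hp : p2 jcg ≤ p1 icg) :
    StackelbergEq (aBl κ lam w T1 C p1 p2) (bBl κ lam w T2 C p1 p2) icg jcg := by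
  have hκ : κ < 0 := hκlam.trans hlam
  have hκp (i : Γ1) : κ ≤ p1 i := (hκ.trans (hp1 i)).le
  have hlamp (i : Γ1) : lam ≤ p1 i := (hlam.trans (hp1 i)).le
  have hfeas : Feasible T1 T2 C icg jcg := hst.feasible hκlam hlam hp1 hp2 hne hA
  have hbdd (i : Γ1) : BddBelow (Set.range (aBl κ lam w T1 C p1 p2 i)) :=
    ⟨κ, Set.forall_mem_range.2 fun j => (le_aPay hκlam.le (hκp i) j).trans (aPay_le_aBl hw)⟩
  refine hst.of_le_add (bestResponse_bBl hw hκp hlamp) hne hbdd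
    (fun _ _ => aBl_le_aPay_add hw) fun j hj => ?_
  have hfeas_j : Feasible T1 T2 C icg j := hfeas.of_mem_bestResponse hκ.le hlam.le hp2 hj
  have hprogress : p2 j = p2 jcg := hfeas_j.progress_eq_of_mem_bestResponse hfeas hj hst.2
  exact (aBl_eq_aPay_add hfeas_j.1 hfeas_j.2.2 (hprogress.trans_le hp)).ge

theorem stmt11 {Γ1 Γ2 : Type*} [Fintype Γ1] [Fintype Γ2] [Nonempty Γ1] [Nonempty Γ2]
    (κ lam : ℝ) (hκlam : κ < lam) (hlam0 : lam < 0)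
    (T1 : Γ1 → Prop) (T2 : Γ2 → Prop) (C : Γ1 → Γ2 → Prop)
    (p1 : Γ1 → ℝ) (p2 : Γ2 → ℝ)
    (hp1 : ∀ i, 0 < p1 i) (hp2 : ∀ j, 0 < p2 j)
    (w : ℝ) (hw : 0 ≤ w)
    (hA : AssumptionA T1 T2 C)
    (icg : Γ1) (jcg : Γ2)
    (hst : StackelbergEq (aPay κ lam T1 C p1) (bPay κ lam T2 C p2) icg jcg)
    (hp : p2 jcg < p1 icg) :
    StackelbergEq (aBl κ lam w T1 C p1 p2) (bBl κ lam w T2 C p1 p2) icg jcg :=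
  stmt11_general hκlam hlam0 hp1 hp2 hw (bestResponse_nonempty _) hA hst hp.le

end
end
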